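/- arXiv:1709.09924 — 2 statements merged into one kernel-verified Lean document; each statement's English description precedes it below -/
import Mathlib

section
/- Let L > 0 with L ∉ 𝒩. If λ ∈ ℂ and θ, u : [0,L] → ℂ are three times continuously differentiable and satisfy −u′(x) − u‴(x) = λ·θ(x) and −θ′(x) − θ‴(x) = λ·u(x) for all x ∈ [0,L], together with the boundary conditions θ(0) = θ(L) = θ′(0) = θ′(L) = 0 and u(0) = u(L) = u′(L) = 0, then θ and u vanish identically on [0,L]. -/
open Set

/-- The set 𝒩 = { (2π/√3)·√(k² + k·l + l²) : k, l positive integers } of critical lengths. -/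
def criticalN : Set ℝ :=
  {x | ∃ k l : ℕ, 0 < k ∧ 0 < l ∧
    x = (2 * Real.pi / Real.sqrt 3) * Real.sqrt ((k : ℝ)^2 + (k : ℝ) * (l : ℝ) + (l : ℝ)^2)}

/-!
The functions `θ + u` and `θ - u` solve the scalar equations `v‴ + v′ ± lam * v = 0`. For one of the
two signs the coefficient of `v` has nonnegative real part, and then the energy
`⟪v, v″⟫ - |v′|² / 2 + |v|² / 2` is nonincreasing; it equals `-|u′ 0|² / 2` at `0` and vanishes
at `L`, which forces the missing boundary condition `u′ 0 = 0` for every eigenvalue.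

So it suffices to see that a solution `v` with `v = v′ = 0` at both ends vanishes (Rosier's lemma).
Factoring the operator over the roots `r`, `s`, `t` of `X³ + X + lam` gives
`v″ L = exp (r L) v″ 0`, and likewise for `s` and `t`. If `v″ 0 = 0`, uniqueness for the Cauchy
problem gives `v = 0`. Otherwise the three exponentials agree, and the roots are distinct: for a
double root `r`, the function `v′ - t v = v″ 0 * x * exp (r x)` would vanish at `L`. Hence
`(r - s) L = 2πi a` and `(s - t) L = 2πi b` with `a`, `b`, `a + b` nonzero integers, and since
`(r - s)² + (r - s) (s - t) + (s - t)² = -3`, the length `L` is critical.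
-/

open Complex (exp)
open scoped ContDiff InnerProductSpace

section ShiftDeriv

variable {E : Type*} [NormedAddCommGroup E] [NormedSpace ℂ E] {L : ℝ} {f : ℝ → E}

/-- The first-order operator `∂ₓ - c`, into which constant-coefficient operators factor. -/
noncomputable def shiftDeriv (c : ℂ) (f : ℝ → E) (x : ℝ) : E :=
  deriv f x - c • f x

lemma contDiff_shiftDeriv {n : ℕ∞ω} (c : ℂ) (hf : ContDiff ℝ (n + 1) f) :
    ContDiff ℝ n (shiftDeriv c f) :=
  hf.deriv'.sub ((hf.of_le le_self_add).const_smul c)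

lemma deriv_shiftDeriv (c : ℂ) (hf : ContDiff ℝ 2 f) :
    deriv (shiftDeriv c f) = shiftDeriv c (deriv f) :=
  funext fun x ↦ ((hf.differentiable_deriv_two x).hasDerivAt.sub
    ((hf.differentiable two_ne_zero x).hasDerivAt.const_smul c)).deriv

lemma shiftDeriv_shiftDeriv (r s : ℂ) (hf : ContDiff ℝ 2 f) (x : ℝ) :
    shiftDeriv r (shiftDeriv s f) x
      = deriv (deriv f) x - (r + s) • deriv f x + (r * s) • f x := by
  rw [shiftDeriv, deriv_shiftDeriv s hf, shiftDeriv, shiftDeriv]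
  module

lemma eq_exp_smul_of_shiftDeriv_eq {c : ℂ} {b : E} (hf : Differentiable ℝ f)
    (h : ∀ x ∈ Icc 0 L, shiftDeriv c f x = exp (c * x) • b) {x : ℝ} (hx : x ∈ Icc 0 L) :
    f x = exp (c * x) • (f 0 + (x : ℂ) • b) := by
  let g : ℝ → E := fun y ↦ exp (-c * y) • f y - (y : ℂ) • b
  have hg (y : ℝ) : HasDerivAt g (exp (-c * y) • shiftDeriv c f y - b) y := by
    have hy : HasDerivAt (fun y : ℝ ↦ (y : ℂ)) 1 y := Complex.ofRealCLM.hasDerivAt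
    refine (((hy.const_mul (-c)).cexp.smul (hf y).hasDerivAt).sub (hy.smul_const b)).congr_deriv ?_
    rw [shiftDeriv]
    module
  have hg_zero (y : ℝ) (hy : y ∈ Ico 0 L) : HasDerivWithinAt g 0 (Ici y) y := by
    refine (hg y).hasDerivWithinAt.congr_deriv ?_
    rw [h y (Ico_subset_Icc_self hy), smul_smul, ← Complex.exp_add]
    simp
  have hg_const : g x = f 0 := by
    simpa [g] using constant_of_has_deriv_right_zero
      (fun y _ ↦ (hg y).continuousAt.continuousWithinAt) hg_zero x hx
  rw [← hg_const, sub_add_cancel, smul_smul, ← Complex.exp_add]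
  simp

lemma eq_exp_smul_of_shiftDeriv_eq_zero {c : ℂ} (hf : Differentiable ℝ f)
    (h : ∀ x ∈ Icc 0 L, shiftDeriv c f x = 0) {x : ℝ} (hx : x ∈ Icc 0 L) :
    f x = exp (c * x) • f 0 := by
  simpa using eq_exp_smul_of_shiftDeriv_eq (b := 0) hf (by simpa using h) hx

lemma eq_zero_of_shiftDeriv_eq_zero {c : ℂ} (hf : Differentiable ℝ f) (h0 : f 0 = 0)
    (h : ∀ x ∈ Icc 0 L, shiftDeriv c f x = 0) {x : ℝ} (hx : x ∈ Icc 0 L) : f x = 0 := by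
  rw [eq_exp_smul_of_shiftDeriv_eq_zero hf h hx, h0, smul_zero]

lemma shiftDeriv_zero_eq_zero_of_shiftDeriv_shiftDeriv_self (hL : 0 < L) {c : ℂ}
    (hf : ContDiff ℝ 2 f) (h0 : f 0 = 0) (hfL : f L = 0)
    (h : ∀ x ∈ Icc 0 L, shiftDeriv c (shiftDeriv c f) x = 0) : shiftDeriv c f 0 = 0 := by
  have hshift : ∀ x ∈ Icc 0 L, shiftDeriv c f x = exp (c * x) • shiftDeriv c f 0 := fun x ↦
    eq_exp_smul_of_shiftDeriv_eq_zero
      ((contDiff_shiftDeriv (n := 1) c hf).differentiable one_ne_zero) h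
  have hL_eq : f L = exp (c * L) • (f 0 + (L : ℂ) • shiftDeriv c f 0) :=
    eq_exp_smul_of_shiftDeriv_eq (hf.differentiable two_ne_zero) hshift (right_mem_Icc.2 hL.le)
  simpa [hfL, h0, hL.ne', Complex.exp_ne_zero, eq_comm (a := (0 : E))] using hL_eq

end ShiftDeriv

lemma exists_roots_cubic {K : Type*} [Field K] [IsAlgClosed K] (b c d : K) :
    ∃ r s t : K, r + s + t = -b ∧ r * s + r * t + s * t = c ∧ r * s * t = -d := by
  let P : Cubic K := ⟨1, b, c, d⟩
  obtain ⟨r, s, t, h⟩ := (Cubic.splits_iff_roots_eq_three (φ := RingHom.id K) (P := P)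
    one_ne_zero).1 (IsAlgClosed.splits _)
  have hb : b = _ := Cubic.b_eq_three_roots (P := P) one_ne_zero h
  have hc : c = _ := Cubic.c_eq_three_roots (P := P) one_ne_zero h
  have hd : d = _ := Cubic.d_eq_three_roots (P := P) one_ne_zero h
  refine ⟨r, s, t, ?_, ?_, ?_⟩ <;> simp [hb, hc, hd, P]

section KdV

variable {E : Type*} [NormedAddCommGroup E] [NormedSpace ℂ E] {L : ℝ} {v : ℝ → E} {r s t lam : ℂ}

/-- The operator `∂ₓ³ + ∂ₓ + lam`, whose kernel consists of the solutions of the spectral problem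
for the linearized Korteweg–de Vries equation. -/
noncomputable def kdvOp (lam : ℂ) (v : ℝ → E) (x : ℝ) : E :=
  deriv (deriv (deriv v)) x + deriv v x + lam • v x

/-- `r`, `s`, `t` are the roots, with multiplicity, of the characteristic polynomial
`X ^ 3 + X + lam` of `kdvOp lam`, expressed through Vieta's formulas. -/
structure IsCharRoots (lam r s t : ℂ) : Prop where
  sum : r + s + t = 0
  pair : r * s + r * t + s * t = 1
  prod : r * s * t = -lam

lemma IsCharRoots.rotate (h : IsCharRoots lam r s t) : IsCharRoots lam s t r where
  sum := by linear_combination h.sum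
  pair := by linear_combination h.pair
  prod := by linear_combination h.prod

lemma exists_isCharRoots (lam : ℂ) : ∃ r s t : ℂ, IsCharRoots lam r s t := by
  obtain ⟨r, s, t, hsum, hpair, hprod⟩ := exists_roots_cubic 0 1 lam
  exact ⟨r, s, t, by simpa using hsum, hpair, hprod⟩

lemma kdvOp_eq_shiftDeriv (hroots : IsCharRoots lam r s t) (hv : ContDiff ℝ 3 v) :
    kdvOp lam v = shiftDeriv r (shiftDeriv s (shiftDeriv t v)) := by
  ext x
  have hderiv : deriv (shiftDeriv t v) = shiftDeriv t (deriv v) :=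
    deriv_shiftDeriv t (hv.of_le (by norm_num))
  have hderiv2 : deriv (shiftDeriv t (deriv v)) = shiftDeriv t (deriv (deriv v)) :=
    deriv_shiftDeriv t (hv.deriv' (n := 2))
  rw [shiftDeriv_shiftDeriv r s (contDiff_shiftDeriv (n := 2) t hv), hderiv, hderiv2]
  simp only [kdvOp, shiftDeriv]
  linear_combination (norm := module) hroots.sum • deriv (deriv v) x - hroots.pair • deriv v x
    + hroots.prod • v x

lemma eq_zero_of_kdvOp_eq_zero (hv : ContDiff ℝ 3 v) (h : ∀ x ∈ Icc 0 L, kdvOp lam v x = 0)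
    (h0 : v 0 = 0) (h1 : deriv v 0 = 0) (h2 : deriv (deriv v) 0 = 0) {x : ℝ} (hx : x ∈ Icc 0 L) :
    v x = 0 := by
  obtain ⟨r, s, t, hroots⟩ := exists_isCharRoots lam
  rw [kdvOp_eq_shiftDeriv hroots hv] at h
  have hv1 : ContDiff ℝ 2 (shiftDeriv t v) := contDiff_shiftDeriv t hv
  have hv2 : ContDiff ℝ 1 (shiftDeriv s (shiftDeriv t v)) := contDiff_shiftDeriv s hv1
  have hst : ∀ y ∈ Icc 0 L, shiftDeriv s (shiftDeriv t v) y = 0 := fun y ↦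
    eq_zero_of_shiftDeriv_eq_zero (hv2.differentiable one_ne_zero)
      (by simp [shiftDeriv_shiftDeriv s t (hv.of_le (by norm_num)), h0, h1, h2]) h
  have ht : ∀ y ∈ Icc 0 L, shiftDeriv t v y = 0 := fun y ↦
    eq_zero_of_shiftDeriv_eq_zero (hv1.differentiable two_ne_zero)
      (by simp [shiftDeriv, h0, h1]) hst
  exact eq_zero_of_shiftDeriv_eq_zero (hv.differentiable three_ne_zero) h0 ht hx

lemma deriv_deriv_eq_exp_smul (hroots : IsCharRoots lam r s t) (hv : ContDiff ℝ 3 v)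
    (h : ∀ x ∈ Icc 0 L, kdvOp lam v x = 0) (h0 : v 0 = 0) (h1 : deriv v 0 = 0)
    {x : ℝ} (hx : x ∈ Icc 0 L) (hvx : v x = 0) (hvx' : deriv v x = 0) :
    deriv (deriv v) x = exp (r * x) • deriv (deriv v) 0 := by
  rw [kdvOp_eq_shiftDeriv hroots hv] at h
  have hst : ContDiff ℝ 1 (shiftDeriv s (shiftDeriv t v)) :=
    contDiff_shiftDeriv s (contDiff_shiftDeriv (n := 2) t hv)
  simpa [shiftDeriv_shiftDeriv s t (hv.of_le (by norm_num)), h0, h1, hvx, hvx'] using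
    eq_exp_smul_of_shiftDeriv_eq_zero (hst.differentiable one_ne_zero) h hx

lemma deriv_deriv_zero_eq_zero_of_double_root (hL : 0 < L) (hroots : IsCharRoots lam r r t)
    (hv : ContDiff ℝ 3 v) (h : ∀ x ∈ Icc 0 L, kdvOp lam v x = 0) (h0 : v 0 = 0)
    (h1 : deriv v 0 = 0) (hvL : v L = 0) (hvL' : deriv v L = 0) : deriv (deriv v) 0 = 0 := by
  rw [kdvOp_eq_shiftDeriv hroots hv] at h
  simpa [shiftDeriv_shiftDeriv r t (hv.of_le (by norm_num)), h0, h1] using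
    shiftDeriv_zero_eq_zero_of_shiftDeriv_shiftDeriv_self hL
      (contDiff_shiftDeriv (n := 2) t hv) (by simp [shiftDeriv, h0, h1])
      (by simp [shiftDeriv, hvL, hvL']) h

end KdV

section CriticalLength

variable {L : ℝ} {r s t : ℂ}

lemma exists_pos_quadForm_eq {a b : ℤ} (ha : a ≠ 0) (hb : b ≠ 0) (hab : a + b ≠ 0) :
    ∃ k l : ℕ, 0 < k ∧ 0 < l ∧ (k : ℤ) ^ 2 + k * l + l ^ 2 = a ^ 2 + a * b + b ^ 2 := by
  suffices ∃ p q : ℤ, 0 < p ∧ 0 < q ∧ p ^ 2 + p * q + q ^ 2 = a ^ 2 + a * b + b ^ 2 by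
    obtain ⟨p, q, hp, hq, hpq⟩ := this
    lift p to ℕ using hp.le
    lift q to ℕ using hq.le
    exact ⟨p, q, by exact_mod_cast hp, by exact_mod_cast hq, hpq⟩
  -- The form is invariant under permutations and sign change of the triple `a`, `b`, `-(a + b)`,
  -- two members of which have the same sign.
  rcases ha.lt_or_gt with ha | ha <;> rcases hb.lt_or_gt with hb | hb
  · exact ⟨-a, -b, by lia, by lia, by ring⟩
  · rcases hab.lt_or_gt with hab | hab
    · exact ⟨b, -(a + b), by lia, by lia, by ring⟩
    · exact ⟨-a, a + b, by lia, by lia, by ring⟩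
  · rcases hab.lt_or_gt with hab | hab
    · exact ⟨a, -(a + b), by lia, by lia, by ring⟩
    · exact ⟨-b, a + b, by lia, by lia, by ring⟩
  · exact ⟨a, b, ha, hb, rfl⟩

lemma mem_criticalN_of_three_mul_sq_eq (hL : 0 < L) {a b : ℤ} (ha : a ≠ 0) (hb : b ≠ 0)
    (hab : a + b ≠ 0) (h : 3 * L ^ 2 = 4 * Real.pi ^ 2 * ((a : ℝ) ^ 2 + a * b + b ^ 2)) :
    L ∈ criticalN := by
  obtain ⟨k, l, hk, hl, hkl⟩ := exists_pos_quadForm_eq ha hb hab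
  refine ⟨k, l, hk, hl, (pow_left_inj₀ hL.le (by positivity) two_ne_zero).1 ?_⟩
  have hkl' : (k : ℝ) ^ 2 + k * l + l ^ 2 = (a : ℝ) ^ 2 + a * b + b ^ 2 := by exact_mod_cast hkl
  rw [mul_pow, div_pow, Real.sq_sqrt (by positivity), Real.sq_sqrt (by positivity)]
  linear_combination h / 3 - 4 * Real.pi ^ 2 / 3 * hkl'

lemma exists_int_ne_zero_of_exp_mul_eq {z w x : ℂ} (hx : x ≠ 0) (hzw : z ≠ w)
    (h : exp (z * x) = exp (w * x)) :
    ∃ n : ℤ, n ≠ 0 ∧ (z - w) * x = n * (2 * Real.pi * Complex.I) := by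
  obtain ⟨n, hn⟩ := Complex.exp_eq_exp_iff_exists_int.1 h
  have hn' : (z - w) * x = n * (2 * Real.pi * Complex.I) := by linear_combination hn
  refine ⟨n, ?_, hn'⟩
  rintro rfl
  simp [sub_eq_zero, hx, hzw] at hn'

lemma mem_criticalN_of_exp_mul_eq (hL : 0 < L) (hsum : r + s + t = 0)
    (hpair : r * s + r * t + s * t = 1) (hrs : r ≠ s) (hst : s ≠ t) (hrt : r ≠ t)
    (hexp_rs : exp (r * L) = exp (s * L)) (hexp_st : exp (s * L) = exp (t * L)) :
    L ∈ criticalN := by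
  have hL' : (L : ℂ) ≠ 0 := by exact_mod_cast hL.ne'
  obtain ⟨a, ha0, ha⟩ := exists_int_ne_zero_of_exp_mul_eq hL' hrs hexp_rs
  obtain ⟨b, hb0, hb⟩ := exists_int_ne_zero_of_exp_mul_eq hL' hst hexp_st
  have hab : a + b ≠ 0 := fun hab ↦ by
    have hab' : (a : ℂ) + b = 0 := by exact_mod_cast hab
    have : (r - t) * L = 0 := by
      linear_combination ha + hb + 2 * Real.pi * Complex.I * hab'
    simp [sub_eq_zero, hL', hrt] at this
  have hdisc : (r - s) ^ 2 + (r - s) * (s - t) + (s - t) ^ 2 = -3 := by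
    linear_combination (r + s + t) * hsum - 3 * hpair
  have h : (3 * L ^ 2 : ℂ) = 4 * Real.pi ^ 2 * ((a : ℂ) ^ 2 + a * b + b ^ 2) := by
    let τ : ℂ := 2 * Real.pi * Complex.I
    calc (3 * L ^ 2 : ℂ)
        = -(((r - s) * L) ^ 2 + (r - s) * L * ((s - t) * L) + ((s - t) * L) ^ 2) := by
          linear_combination (L : ℂ) ^ 2 * hdisc
      _ = -((a * τ) ^ 2 + a * τ * (b * τ) + (b * τ) ^ 2) := by rw [ha, hb]
      _ = 4 * Real.pi ^ 2 * ((a : ℂ) ^ 2 + a * b + b ^ 2) := by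
          linear_combination
            -(4 * Real.pi ^ 2 * ((a : ℂ) ^ 2 + a * b + b ^ 2)) * Complex.I_sq
  exact mem_criticalN_of_three_mul_sq_eq hL ha0 hb0 hab (by exact_mod_cast h)

end CriticalLength

section Rosier

variable {E : Type*} [NormedAddCommGroup E] [NormedSpace ℂ E] {L : ℝ} {v : ℝ → E} {lam : ℂ}

theorem eq_zero_of_kdvOp_eq_zero_of_notMem_criticalN (hL : 0 < L) (hLN : L ∉ criticalN)
    (hv : ContDiff ℝ 3 v) (h : ∀ x ∈ Icc 0 L, kdvOp lam v x = 0)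
    (h0 : v 0 = 0) (h1 : deriv v 0 = 0) (hvL : v L = 0) (hvL' : deriv v L = 0)
    {x : ℝ} (hx : x ∈ Icc 0 L) : v x = 0 := by
  refine eq_zero_of_kdvOp_eq_zero hv h h0 h1 ?_ hx
  by_contra h2
  obtain ⟨r, s, t, hroots⟩ := exists_isCharRoots lam
  have hdistinct {p q z : ℂ} (hpqz : IsCharRoots lam p q z) : p ≠ q := by
    rintro rfl
    exact h2 (deriv_deriv_zero_eq_zero_of_double_root hL hpqz hv h h0 h1 hvL hvL')
  have hexp {p q z : ℂ} (hpqz : IsCharRoots lam p q z) :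
      deriv (deriv v) L = exp (p * L) • deriv (deriv v) 0 :=
    deriv_deriv_eq_exp_smul hpqz hv h h0 h1 (right_mem_Icc.2 hL.le) hvL hvL'
  have hexp_eq {p q z : ℂ} (hpqz : IsCharRoots lam p q z) : exp (p * L) = exp (q * L) :=
    smul_left_injective ℂ h2 ((hexp hpqz).symm.trans (hexp hpqz.rotate))
  exact hLN <| mem_criticalN_of_exp_mul_eq hL hroots.sum hroots.pair (hdistinct hroots)
    (hdistinct hroots.rotate) (hdistinct hroots.rotate.rotate).symm (hexp_eq hroots)
    (hexp_eq hroots.rotate)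

end Rosier

section Energy

variable {F : Type*} [NormedAddCommGroup F] [InnerProductSpace ℝ F] {v : ℝ → F} {a b : ℝ}

/-- The energy of the stationary Korteweg–de Vries equation, chosen so that its derivative is the
real inner product of `v` and `∂ₓ³v + ∂ₓv`. -/
noncomputable def kdvEnergy (v : ℝ → F) (x : ℝ) : ℝ :=
  ⟪v x, deriv (deriv v) x⟫_ℝ - ‖deriv v x‖ ^ 2 / 2 + ‖v x‖ ^ 2 / 2

lemma hasDerivAt_kdvEnergy (hv : ContDiff ℝ 3 v) (x : ℝ) :
    HasDerivAt (kdvEnergy v) ⟪v x, deriv (deriv (deriv v)) x + deriv v x⟫_ℝ x := by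
  have hv' : ContDiff ℝ 2 (deriv v) := hv.deriv' (n := 2)
  have h0 := (hv.differentiable three_ne_zero x).hasDerivAt
  have h1 := (hv'.differentiable two_ne_zero x).hasDerivAt
  have h2 := (hv'.differentiable_deriv_two x).hasDerivAt
  refine (((h0.inner ℝ h2).sub (h1.norm_sq.div_const 2)).add
    (h0.norm_sq.div_const 2)).congr_deriv ?_
  rw [inner_add_right]
  ring

lemma deriv_left_eq_zero_of_inner_nonpos (hab : a ≤ b) (hv : ContDiff ℝ 3 v)
    (h : ∀ x ∈ Icc a b, ⟪v x, deriv (deriv (deriv v)) x + deriv v x⟫_ℝ ≤ 0)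
    (hva : v a = 0) (hvb : v b = 0) (hvb' : deriv v b = 0) : deriv v a = 0 := by
  have hanti : AntitoneOn (kdvEnergy v) (Icc a b) :=
    antitoneOn_of_hasDerivWithinAt_nonpos (convex_Icc a b)
      (fun x _ ↦ (hasDerivAt_kdvEnergy hv x).continuousAt.continuousWithinAt)
      (fun x _ ↦ (hasDerivAt_kdvEnergy hv x).hasDerivWithinAt)
      fun x hx ↦ h x (interior_subset hx)
  have hle : kdvEnergy v b ≤ kdvEnergy v a :=
    hanti (left_mem_Icc.2 hab) (right_mem_Icc.2 hab) hab
  have hnorm : ‖deriv v a‖ ^ 2 ≤ 0 := by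
    simp only [kdvEnergy, hva, hvb, hvb', inner_zero_left, norm_zero] at hle
    linarith
  simpa using hnorm.antisymm (sq_nonneg _)

end Energy

lemma deriv_zero_eq_zero_of_kdvOp_eq_zero {L : ℝ} {lam : ℂ} {v : ℝ → ℂ} (hL : 0 ≤ L)
    (hlam : 0 ≤ lam.re) (hv : ContDiff ℝ 3 v) (h : ∀ x ∈ Icc 0 L, kdvOp lam v x = 0)
    (h0 : v 0 = 0) (hvL : v L = 0) (hvL' : deriv v L = 0) : deriv v 0 = 0 := by
  refine deriv_left_eq_zero_of_inner_nonpos hL hv (fun x hx ↦ ?_) h0 hvL hvL'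
  have hode : deriv (deriv (deriv v)) x + deriv v x = -(lam * v x) :=
    eq_neg_of_add_eq_zero_left (h x hx)
  calc ⟪v x, deriv (deriv (deriv v)) x + deriv v x⟫_ℝ
      = -(lam.re * Complex.normSq (v x)) := by
        rw [hode, Complex.inner, neg_mul, mul_assoc, Complex.mul_conj, Complex.neg_re,
          Complex.re_mul_ofReal]
    _ ≤ 0 := neg_nonpos.2 (mul_nonneg hlam (Complex.normSq_nonneg _))

section Boussinesq

variable {L : ℝ} {lam : ℂ} {θ u : ℝ → ℂ}

/-- `(θ, u)` solves the spectral problem with eigenvalue `lam` for the linearized Boussinesq system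
on `[0, L]`, with all its boundary conditions. -/
structure IsBoussinesqMode (L : ℝ) (lam : ℂ) (θ u : ℝ → ℂ) : Prop where
  contDiff_θ : ContDiff ℝ 3 θ
  contDiff_u : ContDiff ℝ 3 u
  eq_θ : ∀ x ∈ Icc (0 : ℝ) L, -deriv u x - deriv (deriv (deriv u)) x = lam * θ x
  eq_u : ∀ x ∈ Icc (0 : ℝ) L, -deriv θ x - deriv (deriv (deriv θ)) x = lam * u x
  θ_zero : θ 0 = 0
  θ_right : θ L = 0
  deriv_θ_zero : deriv θ 0 = 0
  deriv_θ_right : deriv θ L = 0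
  u_zero : u 0 = 0
  u_right : u L = 0
  deriv_u_right : deriv u L = 0

namespace IsBoussinesqMode

lemma neg_right (h : IsBoussinesqMode L lam θ u) : IsBoussinesqMode L (-lam) θ (-u) where
  contDiff_θ := h.contDiff_θ
  contDiff_u := h.contDiff_u.neg
  eq_θ x hx := by
    simp only [deriv.neg', deriv.fun_neg']
    linear_combination -h.eq_θ x hx
  eq_u x hx := by simpa using h.eq_u x hx
  θ_zero := h.θ_zero
  θ_right := h.θ_right
  deriv_θ_zero := h.deriv_θ_zero
  deriv_θ_right := h.deriv_θ_right
  u_zero := by simp [h.u_zero]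
  u_right := by simp [h.u_right]
  deriv_u_right := by simp [deriv.neg', h.deriv_u_right]

lemma deriv_add_eq (h : IsBoussinesqMode L lam θ u) : deriv (θ + u) = deriv θ + deriv u :=
  funext fun x ↦ deriv_add (h.contDiff_θ.differentiable three_ne_zero x)
    (h.contDiff_u.differentiable three_ne_zero x)

lemma kdvOp_add_eq_zero (h : IsBoussinesqMode L lam θ u) :
    ∀ x ∈ Icc 0 L, kdvOp lam (θ + u) x = 0 := by
  intro x hx
  have hθ : ContDiff ℝ 2 (deriv θ) := h.contDiff_θ.deriv' (n := 2)
  have hu : ContDiff ℝ 2 (deriv u) := h.contDiff_u.deriv' (n := 2)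
  have hderiv2 : deriv (deriv θ + deriv u) = deriv (deriv θ) + deriv (deriv u) :=
    funext fun y ↦ deriv_add (hθ.differentiable two_ne_zero y) (hu.differentiable two_ne_zero y)
  have hderiv3 : deriv (deriv (deriv θ) + deriv (deriv u)) x
      = deriv (deriv (deriv θ)) x + deriv (deriv (deriv u)) x :=
    deriv_add (hθ.differentiable_deriv_two x) (hu.differentiable_deriv_two x)
  rw [kdvOp, h.deriv_add_eq, hderiv2, hderiv3]
  simp only [Pi.add_apply, smul_eq_mul]
  linear_combination -h.eq_θ x hx - h.eq_u x hx

lemma deriv_u_zero_of_re_nonneg (h : IsBoussinesqMode L lam θ u) (hL : 0 ≤ L)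
    (hlam : 0 ≤ lam.re) : deriv u 0 = 0 := by
  simpa [h.deriv_add_eq, h.deriv_θ_zero] using
    deriv_zero_eq_zero_of_kdvOp_eq_zero (v := θ + u) hL hlam (h.contDiff_θ.add h.contDiff_u)
      h.kdvOp_add_eq_zero (by simp [h.θ_zero, h.u_zero]) (by simp [h.θ_right, h.u_right])
      (by simp [h.deriv_add_eq, h.deriv_θ_right, h.deriv_u_right])

lemma deriv_u_zero (h : IsBoussinesqMode L lam θ u) (hL : 0 ≤ L) : deriv u 0 = 0 := by
  rcases le_total 0 lam.re with hlam | hlam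
  · exact h.deriv_u_zero_of_re_nonneg hL hlam
  · simpa [deriv.neg'] using h.neg_right.deriv_u_zero_of_re_nonneg hL (by simpa using hlam)

lemma add_eq_zero (h : IsBoussinesqMode L lam θ u) (hL : 0 < L) (hLN : L ∉ criticalN) {x : ℝ}
    (hx : x ∈ Icc 0 L) : θ x + u x = 0 :=
  eq_zero_of_kdvOp_eq_zero_of_notMem_criticalN (v := θ + u) hL hLN (h.contDiff_θ.add h.contDiff_u)
    h.kdvOp_add_eq_zero (by simp [h.θ_zero, h.u_zero])
    (by simp [h.deriv_add_eq, h.deriv_θ_zero, h.deriv_u_zero hL.le])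
    (by simp [h.θ_right, h.u_right])
    (by simp [h.deriv_add_eq, h.deriv_θ_right, h.deriv_u_right]) hx

end IsBoussinesqMode

end Boussinesq

/-- If `L ∉ 𝒩`, the spectral problem for the linearized Boussinesq system with boundary
conditions `θ(0) = θ(L) = θ′(0) = θ′(L) = 0`, `u(0) = u(L) = u′(L) = 0` has only the trivial
solution. -/
theorem statement_0 (L : ℝ) (hL : 0 < L) (hLN : L ∉ criticalN)
    (lam : ℂ) (θ u : ℝ → ℂ)
    (hθreg : ContDiff ℝ 3 θ) (hureg : ContDiff ℝ 3 u)
    (heq1 : ∀ x ∈ Icc (0 : ℝ) L, -deriv u x - deriv (deriv (deriv u)) x = lam * θ x)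
    (heq2 : ∀ x ∈ Icc (0 : ℝ) L, -deriv θ x - deriv (deriv (deriv θ)) x = lam * u x)
    (hθ0 : θ 0 = 0) (hθL : θ L = 0) (hθ'0 : deriv θ 0 = 0) (hθ'L : deriv θ L = 0)
    (hu0 : u 0 = 0) (huL : u L = 0) (hu'L : deriv u L = 0) :
    ∀ x ∈ Icc (0 : ℝ) L, θ x = 0 ∧ u x = 0 := by
  have h : IsBoussinesqMode L lam θ u :=
    ⟨hθreg, hureg, heq1, heq2, hθ0, hθL, hθ'0, hθ'L, hu0, huL, hu'L⟩
  intro x hx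
  have hadd : θ x + u x = 0 := h.add_eq_zero hL hLN hx
  have hsub : θ x + -u x = 0 := h.neg_right.add_eq_zero hL hLN hx
  exact ⟨by linear_combination (hadd + hsub) / 2, by linear_combination (hadd - hsub) / 2⟩
end

section
/- Let L > 0 be arbitrary. If λ ∈ ℂ and θ, u : [0,L] → ℂ are three times continuously differentiable and satisfy −u′(x) − u‴(x) = λ·θ(x) and −θ′(x) − θ‴(x) = λ·u(x) for all x ∈ [0,L], together with the boundary conditions θ(0) = θ(L) = θ′(0) = θ″(L) = 0 and u(0) = u(L) = u′(L) = u″(L) = 0, then θ and u vanish identically on [0,L]. -/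
open Set

/-!
The combinations `v = θ + u` and `w = θ - u` decouple the system into `v‴ + v′ + λ v = 0` and
`w‴ + w′ - λ w = 0`. Since `∂³ + ∂` is formally skew-adjoint, the bilinear expressions
`v″ w - v′ w′ + v w″ + v w` and `v″ w″ + v′ w′ + λ (v w′ - v′ w)` are constant on `[0, L]`.
Their endpoint values give `v′(0) w′(0) = v′(L) w′(L)`, that is `v′(0)² = -v′(L)²`, and then
`v″(0) w″(0) = 0`. Let `f` be one of `v`, `w` with `f″(0) = 0`, so that `f‴ + f′ ± λ f = 0`. If
`r ≠ 0` is a root of `r³ + r ± λ`, then `f″ + r f′ + (r² + 1) f` is a multiple of `exp (r x)`,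
whence `f′(L) = exp (r L) f′(0)`. The three roots add up to zero, so multiplying these relations
gives `f′(L)³ = f′(0)³`, or `f′(L)² = f′(0)²` when `0` is a root; in either case
`v′(L)⁶ = v′(0)⁶ = -v′(L)⁶`. Hence `v′(L) = w′(L) = 0`, and `v`, `w` have zero Cauchy data at `L`.
-/

section Calculus

variable {a b : ℝ} {f : ℝ → ℂ}

lemma eq_left_of_hasDerivWithinAt_zero
    (hf : ∀ x ∈ Icc a b, HasDerivWithinAt f 0 (Icc a b) x) :
    ∀ x ∈ Icc a b, f x = f a :=
  constant_of_derivWithin_zero (fun x hx => (hf x hx).differentiableWithinAt) fun x hx =>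
    (hf x (Ico_subset_Icc_self hx)).derivWithin
      (uniqueDiffOn_Icc (hx.1.trans_lt hx.2) x (Ico_subset_Icc_self hx))

lemma eq_exp_mul_of_hasDerivWithinAt {r : ℂ}
    (hf : ∀ x ∈ Icc a b, HasDerivWithinAt f (r * f x) (Icc a b) x) :
    ∀ x ∈ Icc a b, f x = Complex.exp (r * (x - a)) * f a := by
  intro x hx
  have hexp (y : ℝ) : HasDerivAt (fun y : ℝ => Complex.exp (-(r * (y - a))))
      (Complex.exp (-(r * (y - a))) * -(r * 1)) y :=
    ((((hasDerivAt_id y).ofReal_comp).sub_const (a : ℂ)).const_mul r).neg.cexp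
  have hconst := eq_left_of_hasDerivWithinAt_zero
    (fun y hy => ((hexp y).hasDerivWithinAt.mul (hf y hy)).congr_deriv (by ring)) x hx
  simp only [Pi.mul_apply, sub_self, mul_zero, neg_zero, Complex.exp_zero, one_mul] at hconst
  rw [← hconst, ← mul_assoc, ← Complex.exp_add, add_neg_cancel, Complex.exp_zero, one_mul]

lemma eq_zero_of_hasDerivWithinAt_of_right_eq_zero {r : ℂ}
    (hf : ∀ x ∈ Icc a b, HasDerivWithinAt f (r * f x) (Icc a b) x) (hb : f b = 0) :
    ∀ x ∈ Icc a b, f x = 0 := by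
  intro x hx
  have hgrowth := eq_exp_mul_of_hasDerivWithinAt hf
  have ha : f a = 0 := by
    simpa [hb, Complex.exp_ne_zero] using hgrowth b ⟨hx.1.trans hx.2, le_rfl⟩
  rw [hgrowth x hx, ha, mul_zero]

lemma hasDerivWithinAt_iterate_deriv {n k : ℕ} (hf : ContDiff ℝ n f) (hk : k < n) (S : Set ℝ) :
    ∀ x ∈ S, HasDerivWithinAt (deriv^[k] f) (deriv^[k + 1] f x) S x := by
  intro x _
  have hfk : ContDiff ℝ (1 + k : ℕ) f := hf.of_le (by exact_mod_cast (by omega : 1 + k ≤ n))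
  rw [Function.iterate_succ_apply']
  exact ((hfk.iterate_deriv' 1 k).differentiable one_ne_zero x).hasDerivAt.hasDerivWithinAt

end Calculus

lemma exists_roots_depressed_cubic (p q : ℂ) :
    ∃ r s t : ℂ, r + s + t = 0 ∧ r * s + r * t + s * t = p ∧ r * s * t = -q := by
  let P : Cubic ℂ := ⟨1, 0, p, q⟩
  have ha : P.a ≠ 0 := one_ne_zero
  obtain ⟨r, s, t, hroots⟩ := (Cubic.splits_iff_roots_eq_three (φ := RingHom.id ℂ) ha).mp
    (IsAlgClosed.splits _)
  have hb := Cubic.b_eq_three_roots ha hroots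
  have hc := Cubic.c_eq_three_roots ha hroots
  have hd := Cubic.d_eq_three_roots ha hroots
  simp only [P, RingHom.id_apply, one_mul] at hb hc hd
  exact ⟨r, s, t, neg_eq_zero.mp hb.symm, hc.symm, by rw [hd, neg_neg]⟩

/-- The function `v` solves `v‴ + κ v′ + lam v = 0` on `[a, b]`; equivalently, `exp (lam t) v(x)`
solves the linear Korteweg–de Vries equation `∂ₜv + κ ∂ₓv + ∂ₓ³v = 0`. The functions `v₁` and `v₂`
stand for `v′` and `v″`, and the equation is encoded as the value of the derivative of `v₂`. -/
structure IsLinearKdVMode (κ lam : ℂ) (a b : ℝ) (v v₁ v₂ : ℝ → ℂ) : Prop where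
  hasDeriv : ∀ x ∈ Icc a b, HasDerivWithinAt v (v₁ x) (Icc a b) x
  hasDeriv₁ : ∀ x ∈ Icc a b, HasDerivWithinAt v₁ (v₂ x) (Icc a b) x
  hasDeriv₂ : ∀ x ∈ Icc a b, HasDerivWithinAt v₂ (-(κ * v₁ x + lam * v x)) (Icc a b) x

namespace IsLinearKdVMode

variable {κ lam : ℂ} {a b : ℝ} {v v₁ v₂ w w₁ w₂ : ℝ → ℂ}

lemma lagrange_pairing_eq (hv : IsLinearKdVMode κ lam a b v v₁ v₂)
    (hw : IsLinearKdVMode κ (-lam) a b w w₁ w₂) :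
    ∀ x ∈ Icc a b, v₂ x * w x - v₁ x * w₁ x + v x * w₂ x + κ * (v x * w x) =
      v₂ a * w a - v₁ a * w₁ a + v a * w₂ a + κ * (v a * w a) :=
  eq_left_of_hasDerivWithinAt_zero fun x hx =>
    (((((hv.hasDeriv₂ x hx).mul (hw.hasDeriv x hx)).sub
      ((hv.hasDeriv₁ x hx).mul (hw.hasDeriv₁ x hx))).add
      ((hv.hasDeriv x hx).mul (hw.hasDeriv₂ x hx))).add
      (((hv.hasDeriv x hx).mul (hw.hasDeriv x hx)).const_mul κ)).congr_deriv (by ring)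

lemma energy_pairing_eq (hv : IsLinearKdVMode κ lam a b v v₁ v₂)
    (hw : IsLinearKdVMode κ (-lam) a b w w₁ w₂) :
    ∀ x ∈ Icc a b,
      v₂ x * w₂ x + κ * (v₁ x * w₁ x) + lam * (v x * w₁ x - v₁ x * w x) =
        v₂ a * w₂ a + κ * (v₁ a * w₁ a) + lam * (v a * w₁ a - v₁ a * w a) :=
  eq_left_of_hasDerivWithinAt_zero fun x hx =>
    ((((hv.hasDeriv₂ x hx).mul (hw.hasDeriv₂ x hx)).add
      (((hv.hasDeriv₁ x hx).mul (hw.hasDeriv₁ x hx)).const_mul κ)).add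
      ((((hv.hasDeriv x hx).mul (hw.hasDeriv₁ x hx)).sub
        ((hv.hasDeriv₁ x hx).mul (hw.hasDeriv x hx))).const_mul lam)).congr_deriv (by ring)

-- The coefficients are those of the polynomial quotient `(z³ + κ z + lam) / (z - r)`.
lemma hasDerivWithinAt_quotient (hv : IsLinearKdVMode κ lam a b v v₁ v₂) {r : ℂ}
    (hr : r ^ 3 + κ * r + lam = 0) :
    ∀ x ∈ Icc a b, HasDerivWithinAt (fun y => v₂ y + r * v₁ y + (r ^ 2 + κ) * v y)
      (r * (v₂ x + r * v₁ x + (r ^ 2 + κ) * v x)) (Icc a b) x := fun x hx =>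
  (((hv.hasDeriv₂ x hx).add ((hv.hasDeriv₁ x hx).const_mul r)).add
    ((hv.hasDeriv x hx).const_mul (r ^ 2 + κ))).congr_deriv (by linear_combination (-v x) * hr)

lemma eq_zero_of_right_eq_zero (hv : IsLinearKdVMode κ lam a b v v₁ v₂)
    (hb : v b = 0) (hb₁ : v₁ b = 0) (hb₂ : v₂ b = 0) : ∀ x ∈ Icc a b, v x = 0 := by
  obtain ⟨r, s, t, hsum, hpair, hprod⟩ := exists_roots_depressed_cubic κ lam
  have hr : r ^ 3 + κ * r + lam = 0 := by
    linear_combination r ^ 2 * hsum - r * hpair + hprod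
  have hquadratic : ∀ x ∈ Icc a b, v₂ x + r * v₁ x + (r ^ 2 + κ) * v x = 0 :=
    eq_zero_of_hasDerivWithinAt_of_right_eq_zero (hv.hasDerivWithinAt_quotient hr)
      (by simp only [hb, hb₁, hb₂, mul_zero, add_zero])
  have hlinear : ∀ x ∈ Icc a b, v₁ x - t * v x = 0 :=
    eq_zero_of_hasDerivWithinAt_of_right_eq_zero (f := fun y => v₁ y - t * v y) (r := s)
      (fun x hx =>
        ((hv.hasDeriv₁ x hx).sub ((hv.hasDeriv x hx).const_mul t)).congr_deriv (by
          linear_combination hquadratic x hx - (v₁ x + r * v x) * hsum + v x * hpair))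
      (by simp only [hb, hb₁, mul_zero, sub_zero])
  exact eq_zero_of_hasDerivWithinAt_of_right_eq_zero (r := t)
    (fun x hx => (hv.hasDeriv x hx).congr_deriv (by linear_combination hlinear x hx)) hb

lemma deriv_right_eq_exp_mul (hv : IsLinearKdVMode κ lam a b v v₁ v₂) (hab : a ≤ b)
    (ha : v a = 0) (hb : v b = 0) (ha₂ : v₂ a = 0) (hb₂ : v₂ b = 0) {r : ℂ} (hr₀ : r ≠ 0)
    (hr : r ^ 3 + κ * r + lam = 0) : v₁ b = Complex.exp (r * (b - a)) * v₁ a := by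
  have hgrowth := eq_exp_mul_of_hasDerivWithinAt (hv.hasDerivWithinAt_quotient hr) b ⟨hab, le_rfl⟩
  simp only [ha, hb, ha₂, hb₂, mul_zero, zero_add, add_zero] at hgrowth
  exact mul_left_cancel₀ hr₀ (by linear_combination hgrowth)

lemma deriv_sq_eq_of_eigenvalue_zero (hv : IsLinearKdVMode κ 0 a b v v₁ v₂) (hab : a ≤ b)
    (ha : v a = 0) (hb : v b = 0) (ha₂ : v₂ a = 0) : v₁ b ^ 2 = v₁ a ^ 2 := by
  have hsecond : ∀ x ∈ Icc a b, v₂ x + κ * v x = 0 := fun x hx => by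
    simpa [ha, ha₂] using
      eq_exp_mul_of_hasDerivWithinAt (hv.hasDerivWithinAt_quotient (r := 0) (by ring)) x hx
  have hgrowth (r : ℂ) (hr : r ^ 2 = -κ) : v₁ b = Complex.exp (r * (b - a)) * v₁ a := by
    simpa [ha, hb] using eq_exp_mul_of_hasDerivWithinAt (f := fun y => v₁ y + r * v y) (r := r)
      (fun x hx => ((hv.hasDeriv₁ x hx).add ((hv.hasDeriv x hx).const_mul r)).congr_deriv (by
        linear_combination hsecond x hx - v x * hr)) b ⟨hab, le_rfl⟩
  obtain ⟨r, hr⟩ := IsAlgClosed.exists_pow_nat_eq (-κ) two_pos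
  calc v₁ b ^ 2
      = Complex.exp (r * (b - a)) * v₁ a * (Complex.exp (-r * (b - a)) * v₁ a) := by
        rw [← hgrowth r hr, ← hgrowth (-r) (by rw [neg_sq, hr]), sq]
    _ = Complex.exp (r * (b - a) + -r * (b - a)) * v₁ a ^ 2 := by rw [Complex.exp_add]; ring
    _ = v₁ a ^ 2 := by
        rw [show r * (b - a) + -r * (b - a) = (0 : ℂ) by ring, Complex.exp_zero, one_mul]

lemma deriv_cube_eq_of_eigenvalue_ne_zero (hv : IsLinearKdVMode κ lam a b v v₁ v₂)
    (hlam : lam ≠ 0) (hab : a ≤ b) (ha : v a = 0) (hb : v b = 0) (ha₂ : v₂ a = 0)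
    (hb₂ : v₂ b = 0) : v₁ b ^ 3 = v₁ a ^ 3 := by
  obtain ⟨r, s, t, hsum, hpair, hprod⟩ := exists_roots_depressed_cubic κ lam
  have hgrowth (z : ℂ) (hz : z ^ 3 + κ * z + lam = 0) :
      v₁ b = Complex.exp (z * (b - a)) * v₁ a :=
    hv.deriv_right_eq_exp_mul hab ha hb ha₂ hb₂ (by rintro rfl; simp [hlam] at hz) hz
  have hr := hgrowth r (by linear_combination r ^ 2 * hsum - r * hpair + hprod)
  have hs := hgrowth s (by linear_combination s ^ 2 * hsum - s * hpair + hprod)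
  have ht := hgrowth t (by linear_combination t ^ 2 * hsum - t * hpair + hprod)
  calc v₁ b ^ 3
      = Complex.exp (r * (b - a)) * v₁ a * (Complex.exp (s * (b - a)) * v₁ a) *
          (Complex.exp (t * (b - a)) * v₁ a) := by rw [← hr, ← hs, ← ht]; ring
    _ = Complex.exp (r * (b - a) + s * (b - a) + t * (b - a)) * v₁ a ^ 3 := by
        rw [Complex.exp_add, Complex.exp_add]; ring
    _ = v₁ a ^ 3 := by rw [← add_mul, ← add_mul, hsum, zero_mul, Complex.exp_zero, one_mul]

lemma deriv_pow_six_eq (hv : IsLinearKdVMode κ lam a b v v₁ v₂) (hab : a ≤ b)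
    (ha : v a = 0) (hb : v b = 0) (ha₂ : v₂ a = 0) (hb₂ : v₂ b = 0) :
    v₁ b ^ 6 = v₁ a ^ 6 := by
  rcases eq_or_ne lam 0 with rfl | hlam
  · rw [pow_mul _ 2 3, pow_mul _ 2 3, hv.deriv_sq_eq_of_eigenvalue_zero hab ha hb ha₂]
  · rw [pow_mul _ 3 2, pow_mul _ 3 2,
      hv.deriv_cube_eq_of_eigenvalue_ne_zero hlam hab ha hb ha₂ hb₂]

lemma deriv_right_eq_zero (hv : IsLinearKdVMode κ lam a b v v₁ v₂)
    (hw : IsLinearKdVMode κ (-lam) a b w w₁ w₂) (hab : a ≤ b)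
    (hva : v a = 0) (hvb : v b = 0) (hvb₂ : v₂ b = 0)
    (hwa : w a = 0) (hwb : w b = 0) (hwb₂ : w₂ b = 0)
    (ha₁ : w₁ a = -v₁ a) (hb₁ : w₁ b = v₁ b) : v₁ b = 0 := by
  have hlagrange : v₁ b * w₁ b = v₁ a * w₁ a := by
    simpa [hva, hvb, hwa, hwb] using hv.lagrange_pairing_eq hw b ⟨hab, le_rfl⟩
  have hsecond : v₂ a * w₂ a = 0 := by
    have henergy := hv.energy_pairing_eq hw b ⟨hab, le_rfl⟩
    rw [hva, hvb, hwa, hwb, hvb₂, hwb₂, hlagrange] at henergy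
    linear_combination -henergy
  have hsq : v₁ a ^ 2 = -v₁ b ^ 2 := by
    rw [ha₁, hb₁] at hlagrange
    linear_combination hlagrange
  have hsix : v₁ b ^ 6 = v₁ a ^ 6 := by
    rcases mul_eq_zero.mp hsecond with hva₂ | hwa₂
    · exact hv.deriv_pow_six_eq hab hva hvb hva₂ hvb₂
    · simpa [ha₁, hb₁, Even.neg_pow (by decide : Even 6)] using
        hw.deriv_pow_six_eq hab hwa hwb hwa₂ hwb₂
  have hsix_neg : v₁ a ^ 6 = -v₁ b ^ 6 := by
    calc v₁ a ^ 6 = (v₁ a ^ 2) ^ 3 := by ring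
      _ = -v₁ b ^ 6 := by rw [hsq]; ring
  exact pow_eq_zero_iff (by norm_num) |>.mp (self_eq_neg.mp (hsix.trans hsix_neg))

end IsLinearKdVMode

theorem statement_5_general {κ lam : ℂ} {a b : ℝ} {θ θ₁ θ₂ θ₃ u u₁ u₂ u₃ : ℝ → ℂ}
    (hθ : ∀ x ∈ Icc a b, HasDerivWithinAt θ (θ₁ x) (Icc a b) x)
    (hθ₁ : ∀ x ∈ Icc a b, HasDerivWithinAt θ₁ (θ₂ x) (Icc a b) x)
    (hθ₂ : ∀ x ∈ Icc a b, HasDerivWithinAt θ₂ (θ₃ x) (Icc a b) x)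
    (hu : ∀ x ∈ Icc a b, HasDerivWithinAt u (u₁ x) (Icc a b) x)
    (hu₁ : ∀ x ∈ Icc a b, HasDerivWithinAt u₁ (u₂ x) (Icc a b) x)
    (hu₂ : ∀ x ∈ Icc a b, HasDerivWithinAt u₂ (u₃ x) (Icc a b) x)
    (heq₁ : ∀ x ∈ Icc a b, -(κ * u₁ x) - u₃ x = lam * θ x)
    (heq₂ : ∀ x ∈ Icc a b, -(κ * θ₁ x) - θ₃ x = lam * u x)
    (hθa : θ a = 0) (hθb : θ b = 0) (hθa₁ : θ₁ a = 0) (hθb₂ : θ₂ b = 0)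
    (hua : u a = 0) (hub : u b = 0) (hub₁ : u₁ b = 0) (hub₂ : u₂ b = 0) :
    ∀ x ∈ Icc a b, θ x = 0 ∧ u x = 0 := by
  intro x hx
  have hadd : IsLinearKdVMode κ lam a b (θ + u) (θ₁ + u₁) (θ₂ + u₂) :=
    ⟨fun y hy => (hθ y hy).add (hu y hy), fun y hy => (hθ₁ y hy).add (hu₁ y hy),
      fun y hy => ((hθ₂ y hy).add (hu₂ y hy)).congr_deriv (by
        simp only [Pi.add_apply]
        linear_combination -heq₁ y hy - heq₂ y hy)⟩
  have hsub : IsLinearKdVMode κ (-lam) a b (θ - u) (θ₁ - u₁) (θ₂ - u₂) :=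
    ⟨fun y hy => (hθ y hy).sub (hu y hy), fun y hy => (hθ₁ y hy).sub (hu₁ y hy),
      fun y hy => ((hθ₂ y hy).sub (hu₂ y hy)).congr_deriv (by
        simp only [Pi.sub_apply]
        linear_combination heq₁ y hy - heq₂ y hy)⟩
  have hθb₁ : θ₁ b = 0 := by
    simpa [hub₁] using hadd.deriv_right_eq_zero hsub (hx.1.trans hx.2) (by simp [hθa, hua])
      (by simp [hθb, hub]) (by simp [hθb₂, hub₂]) (by simp [hθa, hua]) (by simp [hθb, hub])
      (by simp [hθb₂, hub₂]) (by simp [hθa₁]) (by simp [hub₁])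
  have hv : θ x + u x = 0 := hadd.eq_zero_of_right_eq_zero (by simp [hθb, hub])
    (by simp [hθb₁, hub₁]) (by simp [hθb₂, hub₂]) x hx
  have hw : θ x - u x = 0 := hsub.eq_zero_of_right_eq_zero (by simp [hθb, hub])
    (by simp [hθb₁, hub₁]) (by simp [hθb₂, hub₂]) x hx
  exact ⟨by linear_combination (hv + hw) / 2, by linear_combination (hv - hw) / 2⟩

/-- For any `L > 0`, the spectral problem for the linearized Boussinesq system with boundary
conditions `θ(0) = θ(L) = θ′(0) = θ″(L) = 0`, `u(0) = u(L) = u′(L) = u″(L) = 0` has only the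
trivial solution. -/
theorem statement_5 (L : ℝ) (hL : 0 < L)
    (lam : ℂ) (θ u : ℝ → ℂ)
    (hθreg : ContDiff ℝ 3 θ) (hureg : ContDiff ℝ 3 u)
    (heq1 : ∀ x ∈ Icc (0 : ℝ) L, -deriv u x - deriv (deriv (deriv u)) x = lam * θ x)
    (heq2 : ∀ x ∈ Icc (0 : ℝ) L, -deriv θ x - deriv (deriv (deriv θ)) x = lam * u x)
    (hθ0 : θ 0 = 0) (hθL : θ L = 0) (hθ'0 : deriv θ 0 = 0) (hθ''L : deriv (deriv θ) L = 0)
    (hu0 : u 0 = 0) (huL : u L = 0) (hu'L : deriv u L = 0) (hu''L : deriv (deriv u) L = 0) :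
    ∀ x ∈ Icc (0 : ℝ) L, θ x = 0 ∧ u x = 0 := by
  have hderiv {f : ℝ → ℂ} (hf : ContDiff ℝ 3 f) (k : ℕ) (hk : k < 3) :=
    hasDerivWithinAt_iterate_deriv hf hk (Icc 0 L)
  exact statement_5_general (κ := 1) (θ₁ := deriv θ) (θ₃ := deriv (deriv (deriv θ)))
    (u₁ := deriv u) (u₃ := deriv (deriv (deriv u)))
    (hderiv hθreg 0 (by norm_num)) (hderiv hθreg 1 (by norm_num)) (hderiv hθreg 2 (by norm_num))
    (hderiv hureg 0 (by norm_num)) (hderiv hureg 1 (by norm_num)) (hderiv hureg 2 (by norm_num))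
    (by simpa only [one_mul] using heq1) (by simpa only [one_mul] using heq2)
    hθ0 hθL hθ'0 hθ''L hu0 huL hu'L hu''L
end
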